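/- Let p ≥ 6, u = 2^(1−p), and let o_x, o_y be real numbers in [1, 1/(8u) − 2]. Let x_h, x_l, y_h, y_l ∈ F_p satisfy |x_l| ≤ o_x·u·|x_h| and |y_l| ≤ o_y·u·|y_h|, and put o = max(o_x, o_y). Then in any execution of sloppy double-word addition in faithful rounding, the intermediate value w satisfies |w| ≤ (o + 2)·u·(|x_h| + |y_h|). -/

import Mathlib

/-- The radix-2, precision-`p` floating-point numbers with unlimited exponent range. -/
def Fp (p : ℕ) : Set ℝ := {x : ℝ | ∃ M e : ℤ, |M| ≤ 2 ^ p - 1 ∧ x = (M : ℝ) * (2 : ℝ) ^ e}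

/-- Round toward `-∞`: the largest floating-point number `≤ x`. -/
noncomputable def RD (p : ℕ) (x : ℝ) : ℝ := sSup {f : ℝ | f ∈ Fp p ∧ f ≤ x}

/-- Round toward `+∞`: the smallest floating-point number `≥ x`. -/
noncomputable def RU (p : ℕ) (x : ℝ) : ℝ := sInf {f : ℝ | f ∈ Fp p ∧ x ≤ f}

/-- `y` is a faithful rounding of `x`. -/
def Faithful (p : ℕ) (x y : ℝ) : Prop := y = RD p x ∨ y = RU p x

/-- All hypotheses of one execution of the sloppy double-word addition algorithm
(`2Sum(x_h,y_h)`, `v = ∘(x_l+y_l)`, `w = ∘(s_l+v)`, `Fast2Sum(s_h,w)`) in faithful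
rounding, each rounding chosen independently. -/
def SloppyFaithful (p : ℕ) (xh xl yh yl sh a' b' da db sl v w zh d zl : ℝ) : Prop :=
  Faithful p (xh + yh) sh ∧ Faithful p (sh - yh) a' ∧ Faithful p (sh - a') b' ∧
  Faithful p (xh - a') da ∧ Faithful p (yh - b') db ∧ Faithful p (da + db) sl ∧
  Faithful p (xl + yl) v ∧ Faithful p (sl + v) w ∧
  Faithful p (sh + w) zh ∧ Faithful p (zh - sh) d ∧ Faithful p (w - d) zl

/-!
Write `u = 2 ^ (1 - p)` and `T = u * (|xh| + |yh|)`. Every faithful rounding has relative error at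
most `u`. Let `e₁, …, e₅` be the errors committed in computing `sh, a', b', da, db`; then
`da + db = -e₁ - e₃ + e₄ + e₅`, where `|e₁| ≤ T`, and `e₄`, `e₅` are second order, being rounding
errors of `xh - a' = -(e₁ + e₂)` and `yh - b' = e₂ - e₃`. The remaining `e₃` is the rounding error
of `sh - a'`, which is close to `yh`:

* if `|yh| ≤ |xh|`, then `u * |yh| ≤ T / 2`, so `|e₃|` is at most about `T / 2`;
* if `|xh| ≤ |yh|`, then `sh - yh` is a floating-point number, hence `a' = sh - yh` and `e₃ = 0`.

So `|sl|` is at most about `3 / 2 * T`. As `|xl + yl| ≤ o * T` with `o = max ox oy`, the assumption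
`o ≤ 1 / (8 * u) - 2` limits the cost of the roundings producing `v` and `w` to about `T / 4`,
which fits into the slack left below `(o + 2) * T`.
-/

/-- The unit roundoff of faithful rounding in precision `p`: the bound on the relative error of one
operation. It is twice the unit roundoff of rounding to nearest. -/
noncomputable def unitRoundoff (p : ℕ) : ℝ := 2 ^ (1 - (p : ℤ))

lemma unitRoundoff_pos (p : ℕ) : 0 < unitRoundoff p := by
  unfold unitRoundoff
  positivity

section FloatingPoint

variable {p : ℕ} {x y : ℝ}

lemma neg_mem_Fp (hx : x ∈ Fp p) : -x ∈ Fp p := by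
  obtain ⟨M, e, hM, rfl⟩ := hx
  exact ⟨-M, e, by rwa [abs_neg], by push_cast; ring⟩

lemma zero_mem_Fp (p : ℕ) : (0 : ℝ) ∈ Fp p :=
  ⟨0, 0, by simpa using one_le_pow₀ one_le_two, by simp⟩

lemma mul_zpow_mem_Fp (hx : x ∈ Fp p) (k : ℤ) : x * 2 ^ k ∈ Fp p := by
  obtain ⟨M, e, hM, rfl⟩ := hx
  exact ⟨M, e + k, hM, by rw [zpow_add₀ two_ne_zero]; ring⟩

lemma intCast_mul_zpow_mem_Fp [NeZero p] {M : ℤ} (hM : |M| ≤ 2 ^ p) (e : ℤ) :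
    (M : ℝ) * 2 ^ e ∈ Fp p := by
  rcases hM.lt_or_eq with hlt | heq
  · exact ⟨M, e, Int.le_sub_one_of_lt hlt, rfl⟩
  · have one_mem : (1 : ℝ) ∈ Fp p := by
      have : (2 : ℤ) ≤ 2 ^ p := le_self_pow₀ one_le_two (NeZero.ne p)
      exact ⟨1, 0, by rw [abs_one]; omega, by simp⟩
    have pow_mem : (2 : ℝ) ^ p * 2 ^ e ∈ Fp p := by
      simpa using mul_zpow_mem_Fp (mul_zpow_mem_Fp one_mem p) e
    rcases eq_or_eq_neg_of_abs_eq heq with rfl | rfl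
    · simpa using pow_mem
    · simpa using neg_mem_Fp pow_mem

lemma exists_eq_intCast_mul_zpow (hx : x ∈ Fp p) {e : ℤ} (he : 2 ^ (e + p - 1) ≤ |x|) :
    ∃ n : ℤ, x = n * 2 ^ e := by
  obtain ⟨M, k, hM, rfl⟩ := hx
  have hMp : |(M : ℝ)| < 2 ^ p := by exact_mod_cast Int.lt_of_le_sub_one hM
  have hlt : (2 : ℝ) ^ (e + p - 1) < 2 ^ (p + k) := by
    calc (2 : ℝ) ^ (e + p - 1) ≤ |(M : ℝ)| * 2 ^ k := by
          rwa [abs_mul, abs_zpow, abs_two] at he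
      _ < 2 ^ p * 2 ^ k := by gcongr
      _ = 2 ^ (p + k) := by rw [zpow_add₀ two_ne_zero, zpow_natCast]
  have hek : e ≤ k := by
    have := (zpow_lt_zpow_iff_right₀ one_lt_two).1 hlt
    omega
  obtain ⟨j, rfl⟩ := Int.le.dest hek
  exact ⟨M * 2 ^ j, by rw [zpow_add₀ two_ne_zero, zpow_natCast]; push_cast; ring⟩

/-- A form of Sterbenz's lemma without sign conditions: the difference is a multiple of the finer
of the two quanta, and no larger than the operand having that quantum. -/
lemma sub_mem_Fp (hx : x ∈ Fp p) (hy : y ∈ Fp p) (hxy : |x - y| ≤ |x|) (hyx : |x - y| ≤ |y|) :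
    x - y ∈ Fp p := by
  obtain ⟨M, e, hM, hxe⟩ := hx
  obtain ⟨N, f, hN, hyf⟩ := hy
  wlog hef : e ≤ f generalizing x y M N e f
  · rw [abs_sub_comm] at hxy hyx
    simpa using neg_mem_Fp (this hyx hxy N f hN hyf M e hM hxe (le_of_not_ge hef))
  obtain ⟨j, rfl⟩ := Int.le.dest hef
  have hdiff : x - y = ((M - N * 2 ^ j : ℤ) : ℝ) * 2 ^ e := by
    rw [hxe, hyf, zpow_add₀ two_ne_zero, zpow_natCast]
    push_cast
    ring
  have hle : |M - N * 2 ^ j| ≤ |M| := by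
    rw [hdiff, hxe, abs_mul, abs_mul] at hxy
    exact_mod_cast le_of_mul_le_mul_right hxy (by positivity)
  exact ⟨_, e, hle.trans hM, hdiff⟩

end FloatingPoint

section Rounding

variable {p : ℕ}

lemma RU_eq_neg_RD_neg (p : ℕ) (x : ℝ) : RU p x = -RD p (-x) := by
  rw [RU, RD, Real.sInf_def]
  congr 2
  ext f
  exact and_congr ⟨fun h => by simpa using neg_mem_Fp h, neg_mem_Fp⟩ le_neg

lemma abs_floor_div_zpow_le {x : ℝ} {e : ℤ} (hx : |x| ≤ 2 ^ (e + p)) :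
    |⌊x / 2 ^ e⌋| ≤ 2 ^ p := by
  have hdiv : |x / 2 ^ e| ≤ 2 ^ p := by
    rw [abs_div, abs_zpow, abs_two, div_le_iff₀ (by positivity), mul_comm]
    rwa [zpow_add₀ two_ne_zero, zpow_natCast] at hx
  obtain ⟨hlower, hupper⟩ := abs_le.1 hdiv
  refine abs_le.2 ⟨Int.le_floor.2 (by exact_mod_cast hlower), ?_⟩
  exact_mod_cast (Int.floor_le _).trans hupper

lemma isGreatest_floor_mul_zpow [NeZero p] {x : ℝ} {e : ℤ} (hlo : 2 ^ (e + p - 1) ≤ |x|)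
    (hhi : |x| ≤ 2 ^ (e + p)) :
    IsGreatest {f : ℝ | f ∈ Fp p ∧ f ≤ x} (⌊x / 2 ^ e⌋ * 2 ^ e) := by
  have hpos : (0 : ℝ) < 2 ^ e := by positivity
  have le_floor_mul {n : ℤ} (hn : n * 2 ^ e ≤ x) : (n : ℝ) * 2 ^ e ≤ ⌊x / 2 ^ e⌋ * 2 ^ e := by
    gcongr
    exact Int.le_floor.2 ((le_div_iff₀ hpos).2 hn)
  refine ⟨⟨intCast_mul_zpow_mem_Fp (abs_floor_div_zpow_le hhi) e,
    (le_div_iff₀ hpos).1 (Int.floor_le _)⟩, fun f ⟨hf, hfx⟩ => ?_⟩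
  rcases le_or_gt (2 ^ (e + p - 1)) |f| with hfe | hfe
  · obtain ⟨n, rfl⟩ := exists_eq_intCast_mul_zpow hf hfe
    exact le_floor_mul hfx
  -- `f` may fail to be a multiple of `2 ^ e`, but it lies below the binade of `x`, which starts
  -- at one.
  · have hx : 2 ^ (e + p - 1) ≤ x := by
      rcases le_abs'.1 hlo with h | h
      · linarith [(abs_lt.1 hfe).1]
      · exact h
    have hstart : ((2 ^ (p - 1) : ℤ) : ℝ) * 2 ^ e = 2 ^ (e + p - 1) := by
      rw [show e + p - 1 = (p - 1 : ℕ) + e by have := NeZero.one_le (n := p); omega,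
        zpow_add₀ two_ne_zero, zpow_natCast, Int.cast_pow, Int.cast_ofNat]
    calc f ≤ 2 ^ (e + p - 1) := (abs_lt.1 hfe).2.le
      _ = ((2 ^ (p - 1) : ℤ) : ℝ) * 2 ^ e := hstart.symm
      _ ≤ ⌊x / 2 ^ e⌋ * 2 ^ e := le_floor_mul (hstart.trans_le hx)

lemma exists_isGreatest_sub_le (p : ℕ) [NeZero p] (x : ℝ) :
    ∃ r, IsGreatest {f : ℝ | f ∈ Fp p ∧ f ≤ x} r ∧ x - r ≤ unitRoundoff p * |x| := by
  rcases eq_or_ne x 0 with rfl | hx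
  · exact ⟨0, ⟨⟨zero_mem_Fp p, le_rfl⟩, fun f hf => hf.2⟩, by simp⟩
  obtain ⟨n, hlo, hhi⟩ := exists_mem_Ico_zpow (abs_pos.2 hx) one_lt_two
  obtain ⟨e, rfl⟩ : ∃ e : ℤ, n = e + p - 1 := ⟨n - p + 1, by ring⟩
  rw [sub_add_cancel] at hhi
  refine ⟨_, isGreatest_floor_mul_zpow hlo hhi.le, ?_⟩
  have hpos : (0 : ℝ) < 2 ^ e := by positivity
  calc x - ⌊x / 2 ^ e⌋ * 2 ^ e ≤ 2 ^ e := by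
        have := (div_lt_iff₀ hpos).1 (Int.lt_floor_add_one (x / 2 ^ e))
        linarith
    _ = unitRoundoff p * 2 ^ (e + p - 1) := by
        rw [unitRoundoff, ← zpow_add₀ two_ne_zero]
        congr 1
        ring
    _ ≤ unitRoundoff p * |x| := by gcongr; exact (unitRoundoff_pos p).le

lemma isGreatest_RD (p : ℕ) [NeZero p] (x : ℝ) :
    IsGreatest {f : ℝ | f ∈ Fp p ∧ f ≤ x} (RD p x) := by
  obtain ⟨r, hr, -⟩ := exists_isGreatest_sub_le p x
  rwa [RD, hr.csSup_eq]

lemma abs_RD_sub_le (p : ℕ) [NeZero p] (x : ℝ) : |RD p x - x| ≤ unitRoundoff p * |x| := by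
  obtain ⟨r, hr, hrx⟩ := exists_isGreatest_sub_le p x
  rwa [RD, hr.csSup_eq, abs_sub_comm, abs_of_nonneg (sub_nonneg.2 hr.1.2)]

namespace Faithful

variable {x y f : ℝ}

lemma neg (h : Faithful p x y) : Faithful p (-x) (-y) := by
  rcases h with rfl | rfl
  · exact .inr (by rw [RU_eq_neg_RD_neg, neg_neg])
  · exact .inl (by rw [RU_eq_neg_RD_neg, neg_neg])

variable [NeZero p]

lemma mem_Fp (h : Faithful p x y) : y ∈ Fp p := by
  rcases h with rfl | rfl
  · exact (isGreatest_RD p x).1.1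
  · rw [RU_eq_neg_RD_neg]
    exact neg_mem_Fp (isGreatest_RD p (-x)).1.1

lemma le_of_mem_Fp_of_le (h : Faithful p x y) (hf : f ∈ Fp p) (hfx : f ≤ x) : f ≤ y := by
  rcases h with rfl | rfl
  · exact (isGreatest_RD p x).2 ⟨hf, hfx⟩
  · rw [RU_eq_neg_RD_neg]
    exact hfx.trans (le_neg.2 (isGreatest_RD p (-x)).1.2)

lemma ge_of_mem_Fp_of_ge (h : Faithful p x y) (hf : f ∈ Fp p) (hxf : x ≤ f) : y ≤ f :=
  neg_le_neg_iff.1 (h.neg.le_of_mem_Fp_of_le (neg_mem_Fp hf) (neg_le_neg hxf))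

lemma eq_of_mem_Fp (h : Faithful p x y) (hx : x ∈ Fp p) : y = x :=
  le_antisymm (h.ge_of_mem_Fp_of_ge hx le_rfl) (h.le_of_mem_Fp_of_le hx le_rfl)

lemma abs_sub_le (h : Faithful p x y) : |y - x| ≤ unitRoundoff p * |x| := by
  rcases h with rfl | rfl
  · exact abs_RD_sub_le p x
  · have := abs_RD_sub_le p (-x)
    rwa [abs_neg, ← abs_neg, neg_sub', ← RU_eq_neg_RD_neg, neg_neg] at this

lemma abs_le_one_add_mul (h : Faithful p x y) : |y| ≤ (1 + unitRoundoff p) * |x| := by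
  have := abs_sub_abs_le_abs_sub y x
  linarith [h.abs_sub_le]

end Faithful

end Rounding

section TwoSum

variable {p : ℕ} [NeZero p] {x y s a b da db sl : ℝ}

/-- Either `y / 2` and `2 * y` enclose `x + y`, hence also `s`, and Sterbenz's lemma applies to
`s - y`; or `x` is so close to `-y` that it applies to `x + y`, whence `s - y = x`. -/
lemma Faithful.sub_right_mem_Fp (hs : Faithful p (x + y) s) (hx : x ∈ Fp p) (hy : y ∈ Fp p)
    (hxy : |x| ≤ |y|) : s - y ∈ Fp p := by
  wlog hy0 : 0 ≤ y generalizing x y s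
  · have hs' : Faithful p (-x + -y) (-s) := by simpa only [neg_add] using hs.neg
    have := this hs' (neg_mem_Fp hx) (neg_mem_Fp hy) (by simpa only [abs_neg]) (by linarith)
    simpa [neg_add_eq_sub] using neg_mem_Fp this
  rw [abs_of_nonneg hy0] at hxy
  obtain ⟨hyx, hxy⟩ := abs_le.1 hxy
  rcases le_total (y / 2) (x + y) with hlarge | hsmall
  · have hhalf : y / 2 ∈ Fp p := by simpa [div_eq_mul_inv] using mul_zpow_mem_Fp hy (-1)
    have hdouble : y * 2 ∈ Fp p := by simpa using mul_zpow_mem_Fp hy 1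
    have hlow := hs.le_of_mem_Fp_of_le hhalf hlarge
    have hhigh := hs.ge_of_mem_Fp_of_ge hdouble (by linarith)
    apply sub_mem_Fp hs.mem_Fp hy
    · rw [abs_of_nonneg (by linarith : 0 ≤ s)]
      exact abs_le.2 ⟨by linarith, by linarith⟩
    · rw [abs_of_nonneg hy0]
      exact abs_le.2 ⟨by linarith, by linarith⟩
  · have hsum : x - -y ∈ Fp p := by
      apply sub_mem_Fp hx (neg_mem_Fp hy)
      · rw [abs_of_nonpos (by linarith : x ≤ 0)]
        exact abs_le.2 ⟨by linarith, by linarith⟩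
      · rw [abs_neg, abs_of_nonneg hy0]
        exact abs_le.2 ⟨by linarith, by linarith⟩
    rw [hs.eq_of_mem_Fp (by simpa using hsum)]
    simpa using hx

lemma twoSum_abs_high_error_le (hs : Faithful p (x + y) s) :
    |s - (x + y)| ≤ unitRoundoff p * (|x| + |y|) :=
  hs.abs_sub_le.trans
    (mul_le_mul_of_nonneg_left (abs_add_le x y) (unitRoundoff_pos p).le)

lemma twoSum_abs_fst_error_le (hs : Faithful p (x + y) s) (ha : Faithful p (s - y) a) :
    |a - (s - y)| ≤ (1 + unitRoundoff p) * (unitRoundoff p * (|x| + |y|)) := by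
  have hu := (unitRoundoff_pos p).le
  calc |a - (s - y)| ≤ unitRoundoff p * |s - y| := ha.abs_sub_le
    _ = unitRoundoff p * |x + (s - (x + y))| := by ring_nf
    _ ≤ unitRoundoff p * (|x| + unitRoundoff p * (|x| + |y|)) := by
        gcongr
        exact (abs_add_le _ _).trans (by gcongr; exact twoSum_abs_high_error_le hs)
    _ ≤ unitRoundoff p * ((|x| + |y|) + unitRoundoff p * (|x| + |y|)) := by
        gcongr
        exact le_add_of_nonneg_right (abs_nonneg y)
    _ = (1 + unitRoundoff p) * (unitRoundoff p * (|x| + |y|)) := by ring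

lemma twoSum_abs_snd_error_le (hx : x ∈ Fp p) (hy : y ∈ Fp p) (hs : Faithful p (x + y) s)
    (ha : Faithful p (s - y) a) (hb : Faithful p (s - a) b) :
    |b - (s - a)| ≤
      (1 / 2 + unitRoundoff p + unitRoundoff p ^ 2) * (unitRoundoff p * (|x| + |y|)) := by
  have hu := (unitRoundoff_pos p).le
  rcases le_total |x| |y| with hxy | hyx
  · have ha_eq : a = s - y := ha.eq_of_mem_Fp (hs.sub_right_mem_Fp hx hy hxy)
    have hb_eq : b = s - a := hb.eq_of_mem_Fp (by rwa [ha_eq, sub_sub_cancel])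
    rw [hb_eq, sub_self, abs_zero]
    positivity
  · calc |b - (s - a)| ≤ unitRoundoff p * |s - a| := hb.abs_sub_le
      _ = unitRoundoff p * |y - (a - (s - y))| := by ring_nf
      _ ≤ unitRoundoff p *
            ((|x| + |y|) / 2 + (1 + unitRoundoff p) * (unitRoundoff p * (|x| + |y|))) := by
          gcongr
          refine (abs_sub _ _).trans (add_le_add ?_ (twoSum_abs_fst_error_le hs ha))
          linarith
      _ = _ := by ring

lemma twoSum_abs_low_le (hx : x ∈ Fp p) (hy : y ∈ Fp p) (hs : Faithful p (x + y) s)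
    (ha : Faithful p (s - y) a) (hb : Faithful p (s - a) b) (hda : Faithful p (x - a) da)
    (hdb : Faithful p (y - b) db) (hsl : Faithful p (da + db) sl) :
    |sl| ≤ (1 + unitRoundoff p) ^ 2 * (3 / 2 + 3 * unitRoundoff p + unitRoundoff p ^ 2) *
      (unitRoundoff p * (|x| + |y|)) := by
  have hs_err := abs_le.1 (twoSum_abs_high_error_le hs)
  have ha_err := abs_le.1 (twoSum_abs_fst_error_le hs ha)
  have hb_err := abs_le.1 (twoSum_abs_snd_error_le hx hy hs ha hb)
  have hda_err := hda.abs_sub_le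
  have hdb_err := hdb.abs_sub_le
  have hu := (unitRoundoff_pos p).le
  set u := unitRoundoff p
  set T := u * (|x| + |y|)
  have hxa : |x - a| ≤ (2 + u) * T := abs_le.2 ⟨by linarith, by linarith⟩
  have hyb : |y - b| ≤ (3 / 2 + 2 * u + u ^ 2) * T := abs_le.2 ⟨by linarith, by linarith⟩
  have hda_err := abs_le.1 (hda_err.trans (mul_le_mul_of_nonneg_left hxa hu))
  have hdb_err := abs_le.1 (hdb_err.trans (mul_le_mul_of_nonneg_left hyb hu))
  have hsum : |da + db| ≤ (1 + u) * (3 / 2 + 3 * u + u ^ 2) * T :=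
    abs_le.2 ⟨by linarith, by linarith⟩
  calc |sl| ≤ (1 + u) * |da + db| := hsl.abs_le_one_add_mul
    _ ≤ (1 + u) * ((1 + u) * (3 / 2 + 3 * u + u ^ 2) * T) := by gcongr
    _ = _ := by ring

end TwoSum

lemma unitRoundoff_le_of_six_le {p : ℕ} (hp : 6 ≤ p) : unitRoundoff p ≤ 1 / 32 :=
  calc (2 : ℝ) ^ (1 - (p : ℤ)) ≤ 2 ^ (-5 : ℤ) := zpow_le_zpow_right₀ one_le_two (by omega)
    _ = 1 / 32 := by norm_num

lemma abs_add_le_max_mul {a b c d r t : ℝ} (ha : |a| ≤ r * |c|) (hb : |b| ≤ t * |d|) :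
    |a + b| ≤ max r t * (|c| + |d|) :=
  calc |a + b| ≤ |a| + |b| := abs_add_le a b
    _ ≤ max r t * |c| + max r t * |d| := by
        gcongr
        · exact ha.trans (by gcongr; exact le_max_left r t)
        · exact hb.trans (by gcongr; exact le_max_right r t)
    _ = max r t * (|c| + |d|) := by ring

lemma sloppy_coefficient_le {u o : ℝ} (hu0 : 0 < u) (hu : u ≤ 1 / 32)
    (ho : o ≤ 1 / (8 * u) - 2) :
    (1 + u) * ((1 + u) ^ 2 * (3 / 2 + 3 * u + u ^ 2) + (1 + u) * o) ≤ o + 2 := by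
  have hou : o * u ≤ 1 / 8 - 2 * u :=
    calc o * u ≤ (1 / (8 * u) - 2) * u := by gcongr
      _ = 1 / 8 - 2 * u := by field_simp
  have hlow : (1 + u) ^ 3 * (3 / 2 + 3 * u + u ^ 2) ≤ 7 / 4 :=
    calc (1 + u) ^ 3 * (3 / 2 + 3 * u + u ^ 2)
        ≤ (1 + 1 / 32) ^ 3 * (3 / 2 + 3 * (1 / 32) + (1 / 32) ^ 2) := by gcongr
      _ ≤ 7 / 4 := by norm_num
  have hv : (2 + u) * (o * u) ≤ 1 / 4 :=
    calc (2 + u) * (o * u) ≤ (2 + u) * (1 / 8 - 2 * u) := by gcongr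
      _ ≤ 1 / 4 := by nlinarith
  linarith

theorem sloppy_w_bound_general
    {p : ℕ} (hp : 6 ≤ p) {u : ℝ} (hu : u = (2 : ℝ) ^ (1 - (p : ℤ)))
    {ox oy : ℝ} (hox : ox ≤ 1 / (8 * u) - 2) (hoy : oy ≤ 1 / (8 * u) - 2)
    {xh xl yh yl : ℝ} (hxh : xh ∈ Fp p) (hyh : yh ∈ Fp p)
    (hovx : |xl| ≤ ox * u * |xh|) (hovy : |yl| ≤ oy * u * |yh|)
    {sh a' b' da db sl v w zh d zl : ℝ}
    (hrun : SloppyFaithful p xh xl yh yl sh a' b' da db sl v w zh d zl) :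
    |w| ≤ (max ox oy + 2) * u * (|xh| + |yh|) := by
  have : NeZero p := ⟨by omega⟩
  obtain ⟨hs, ha, hb, hda, hdb, hsl, hv, hw, -⟩ := hrun
  have hu0 : 0 < u := hu ▸ unitRoundoff_pos p
  have hu32 : u ≤ 1 / 32 := hu ▸ unitRoundoff_le_of_six_le hp
  have hlow := twoSum_abs_low_le hxh hyh hs ha hb hda hdb hsl
  have hv_le := hv.abs_le_one_add_mul
  have hw_le := hw.abs_le_one_add_mul
  rw [unitRoundoff, ← hu] at hlow hv_le hw_le
  have hl : |xl + yl| ≤ max ox oy * (u * (|xh| + |yh|)) := by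
    have := abs_add_le_max_mul hovx hovy
    rwa [← max_mul_of_nonneg _ _ hu0.le, mul_assoc] at this
  set T := u * (|xh| + |yh|)
  set o := max ox oy
  calc |w| ≤ (1 + u) * (|sl| + |v|) := hw_le.trans (by gcongr; exact abs_add_le sl v)
    _ ≤ (1 + u) * ((1 + u) ^ 2 * (3 / 2 + 3 * u + u ^ 2) * T + (1 + u) * (o * T)) := by
        gcongr
        exact hv_le.trans (by gcongr)
    _ = (1 + u) * ((1 + u) ^ 2 * (3 / 2 + 3 * u + u ^ 2) + (1 + u) * o) * T := by ring
    _ ≤ (o + 2) * T := by gcongr; exact sloppy_coefficient_le hu0 hu32 (max_le hox hoy)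
    _ = (o + 2) * u * (|xh| + |yh|) := (mul_assoc _ _ _).symm

theorem sloppy_w_bound
    (p : ℕ) (hp : 6 ≤ p) (u : ℝ) (hu : u = (2 : ℝ) ^ (1 - (p : ℤ)))
    (ox oy : ℝ) (hox1 : 1 ≤ ox) (hox2 : ox ≤ 1 / (8 * u) - 2)
    (hoy1 : 1 ≤ oy) (hoy2 : oy ≤ 1 / (8 * u) - 2)
    (xh xl yh yl : ℝ)
    (hxh : xh ∈ Fp p) (hxl : xl ∈ Fp p) (hyh : yh ∈ Fp p) (hyl : yl ∈ Fp p)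
    (hovx : |xl| ≤ ox * u * |xh|) (hovy : |yl| ≤ oy * u * |yh|)
    (sh a' b' da db sl v w zh d zl : ℝ)
    (hrun : SloppyFaithful p xh xl yh yl sh a' b' da db sl v w zh d zl) :
    |w| ≤ (max ox oy + 2) * u * (|xh| + |yh|) :=
  sloppy_w_bound_general hp hu hox2 hoy2 hxh hyh hovx hovy hrun
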